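/- The variety V₀ has solvable word problem: for every finite presentation 𝒫 in finitely many generators and relations, the relation θ_𝒫 is decidable. -/

import Mathlib

/-!
Fix a finite presentation with generators `Fin k` and relations `R`.

The laws other than the star laws reduce every term to `0`, to a product `w_S` of distinct
generators over a nonempty set `S`, or to `h n (w_S)`. Such a normal form is computed by a primitive
recursive function of the code of the term (`primrec_evalCode`, `evalCode_encode`), and terms with
the same normal form are congruent (`eqv_of_eval_eq`). This is checked in the presented commutative
semigroup with a unit adjoined, where `w_S` is a genuine finite product.

The star laws look undecidable, but over `k` generators a product of more than `k` terms already
vanishes by the other laws (`prodVars_eqv_zero`), so only the star laws of index at most `k` matter.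
Therefore the congruence is invariant under every permutation of the indices of the `h n` that
fixes the indices up to `k` and those occurring in `R` (`PresEqv.rename`). With `B` above all of
these, such a permutation moves the at most two indices in a pair of normal forms to values below
`B + 2` (`exists_perm_compress`). So whether two terms are congruent is read off from a finite
table, indexed by the compressed pair of normal forms. The table depends on the presentation and is
not constructed effectively; being finite, it is computable all the same.
-/

open FirstOrder Language

/-- The congruence on the absolutely free algebra (term algebra) `L.Term X` generated by a set
`R` of relations together with all substitution instances of a set `E` of laws (equations between
terms with variables from `ℕ`). -/
inductive PresEqv {L : FirstOrder.Language} {X : Type*}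
    (E : Set (L.Term ℕ × L.Term ℕ)) (R : Set (L.Term X × L.Term X)) :
    L.Term X → L.Term X → Prop
  | rel {s t : L.Term X} : (s, t) ∈ R → PresEqv E R s t
  | law (p : L.Term ℕ × L.Term ℕ) (σ : ℕ → L.Term X) :
      p ∈ E → PresEqv E R (p.1.subst σ) (p.2.subst σ)
  | refl (t : L.Term X) : PresEqv E R t t
  | symm {s t : L.Term X} : PresEqv E R s t → PresEqv E R t s
  | trans {s t u : L.Term X} : PresEqv E R s t → PresEqv E R t u → PresEqv E R s u
  | app {n : ℕ} (f : L.Functions n) (ts us : Fin n → L.Term X) :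
      (∀ i, PresEqv E R (ts i) (us i)) →
      PresEqv E R (Term.func f ts) (Term.func f us)

/-- A binary relation on an encodable type is decidable (relative to the encoding) if some
computable boolean function decides it on codes. -/
def DecidableRelVia {α : Type*} [Encodable α] (r : α → α → Prop) : Prop :=
  ∃ f : ℕ → Bool, Computable f ∧
    ∀ a b : α, r a b ↔ f (Nat.pair (Encodable.encode a) (Encodable.encode b)) = true

/-- A set of an encodable type is decidable (relative to the encoding). -/
def DecidableSetVia {α : Type*} [Encodable α] (s : Set α) : Prop :=
  ∃ f : ℕ → Bool, Computable f ∧ ∀ a : α, a ∈ s ↔ f (Encodable.encode a) = true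

/-- The variety with laws `E` has uniformly solvable word problem: a single algorithm decides,
given a finite presentation (finitely many generators `Fin k` and a finite list `R` of relations)
and a pair of terms, whether the pair lies in the congruence `θ_𝒫`. -/
def UniformWP (L : FirstOrder.Language) [∀ k : ℕ, Encodable (L.Term (Fin k))]
    (E : Set (L.Term ℕ × L.Term ℕ)) : Prop :=
  ∃ f : ℕ → Bool, Computable f ∧
    ∀ (k : ℕ) (R : List (L.Term (Fin k) × L.Term (Fin k))) (s t : L.Term (Fin k)),
      PresEqv E {p | p ∈ R} s t ↔
        f (Encodable.encode
            (⟨k, (R, s, t)⟩ : Σ k : ℕ,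
              List (L.Term (Fin k) × L.Term (Fin k)) × L.Term (Fin k) × L.Term (Fin k))) = true

/-- The variety with laws `E` has solvable word problem: for each finite presentation the
congruence `θ_𝒫` is decidable. -/
def SolvableWP (L : FirstOrder.Language) [∀ k : ℕ, Encodable (L.Term (Fin k))]
    (E : Set (L.Term ℕ × L.Term ℕ)) : Prop :=
  ∀ (k : ℕ) (R : List (L.Term (Fin k) × L.Term (Fin k))),
    DecidableRelVia (PresEqv E {p | p ∈ R})

/-- The finite algebraic signature with `N` operation symbols of arities `ar`. -/
def FinLang (N : ℕ) (ar : Fin N → ℕ) : FirstOrder.Language :=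
  ⟨fun n => {i : Fin N // ar i = n}, fun _ => Empty⟩

instance (N : ℕ) (ar : Fin N → ℕ) (X : Type*) [Encodable X] :
    Encodable ((FinLang N ar).Term X) :=
  inferInstanceAs (Encodable (Language.Term ⟨fun n => {i : Fin N // ar i = n}, fun _ => Empty⟩ X))

/-! ### The variety `V₀` of Wells' example (§7 of the paper) -/

/-- The signature of `V₀`: a constant `0`, a binary multiplication, and countably many unary
operations `h n`. -/
inductive V0Ops : ℕ → Type
  | zero : V0Ops 0
  | mul : V0Ops 2
  | h (n : ℕ) : V0Ops 1

def V0Lang : FirstOrder.Language := ⟨V0Ops, fun _ => Empty⟩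

def V0Ops.code : (Σ i, V0Ops i) → ℕ ⊕ ℕ
  | ⟨_, .zero⟩ => Sum.inl 0
  | ⟨_, .mul⟩ => Sum.inl 1
  | ⟨_, .h n⟩ => Sum.inr n

def V0Ops.decode' : ℕ ⊕ ℕ → Option (Σ i, V0Ops i)
  | Sum.inl 0 => some ⟨0, .zero⟩
  | Sum.inl 1 => some ⟨2, .mul⟩
  | Sum.inl _ => none
  | Sum.inr n => some ⟨1, .h n⟩

instance : Encodable (Σ i, V0Lang.Functions i) :=
  Encodable.ofLeftInjection V0Ops.code V0Ops.decode' (by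
    rintro ⟨i, op⟩; cases op <;> rfl)

/-- Term-building helpers for `V₀`. -/
def vzero {α : Type*} : V0Lang.Term α := Term.func V0Ops.zero ![]

def vmul {α : Type*} (s t : V0Lang.Term α) : V0Lang.Term α := Term.func V0Ops.mul ![s, t]

def vh {α : Type*} (n : ℕ) (t : V0Lang.Term α) : V0Lang.Term α := Term.func (V0Ops.h n) ![t]

/-- The product `x₁ x₂ ⋯ x_j` of the first `j` variables (associated to the left); by convention
the empty product is the constant `0`. -/
def prodVars : ℕ → V0Lang.Term ℕ
  | 0 => vzero
  | j + 1 => (List.range j).foldl (fun acc i => vmul acc (Term.var (i + 1))) (Term.var 0)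

/-- The recursive set of laws defining `V₀`, where `m` enumerates the r.e. non-recursive set. -/
inductive V0Law (m : ℕ → ℕ) : V0Lang.Term ℕ × V0Lang.Term ℕ → Prop
  | comm : V0Law m (vmul (Term.var 0) (Term.var 1), vmul (Term.var 1) (Term.var 0))
  | assoc : V0Law m (vmul (Term.var 0) (vmul (Term.var 1) (Term.var 2)),
      vmul (vmul (Term.var 0) (Term.var 1)) (Term.var 2))
  | mulZero : V0Law m (vmul (Term.var 0) vzero, vzero)
  | sq : V0Law m (vmul (Term.var 0) (Term.var 0), vzero)
  | mulH (n : ℕ) : V0Law m (vmul (Term.var 0) (vh n (Term.var 1)), vzero)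
  | idem (n : ℕ) : V0Law m (vh n (vh n (Term.var 0)), vh n (Term.var 0))
  | orth (n k : ℕ) (h : n ≠ k) : V0Law m (vh n (vh k (Term.var 0)), vzero)
  | star (n : ℕ) : V0Law m ((vh (m n))^[n] (prodVars (m n)), vzero)

def V0Laws (m : ℕ → ℕ) : Set (V0Lang.Term ℕ × V0Lang.Term ℕ) := {p | V0Law m p}

/-! ### Permuting the indices of the operations `h n` -/

section Renaming

/-- The action of a map of the indices, `h n ↦ h (e n)`, on the operation symbols. -/
def renameOp (e : ℕ → ℕ) : {n : ℕ} → V0Lang.Functions n → V0Lang.Functions n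
  | _, .zero => .zero
  | _, .mul => .mul
  | _, .h n => .h (e n)

/-- The action of a map of the indices, `h n ↦ h (e n)`, on terms. -/
def renameTerm {α : Type*} (e : ℕ → ℕ) : V0Lang.Term α → V0Lang.Term α :=
  LHom.onTerm (L := V0Lang) (L' := V0Lang) ⟨fun _ f => renameOp e f, fun _ r => r⟩

variable {α β : Type*} (e : ℕ → ℕ)

@[simp] theorem renameTerm_var (a : α) :
    renameTerm e (Term.var a : V0Lang.Term α) = Term.var a := rfl

theorem renameTerm_func {n : ℕ} (f : V0Lang.Functions n) (ts : Fin n → V0Lang.Term α) :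
    renameTerm e (Term.func f ts) =
      Term.func (L := V0Lang) (renameOp e f) (fun i => renameTerm e (ts i)) := rfl

@[simp] theorem renameTerm_vzero : renameTerm e (vzero : V0Lang.Term α) = vzero := by
  exact congrArg (Term.func (L := V0Lang) _) (funext fun i => i.elim0)

@[simp] theorem renameTerm_vmul (s t : V0Lang.Term α) :
    renameTerm e (vmul s t) = vmul (renameTerm e s) (renameTerm e t) := by
  refine congrArg (Term.func (L := V0Lang) _) (funext fun i => ?_)
  fin_cases i <;> rfl

@[simp] theorem renameTerm_vh (n : ℕ) (t : V0Lang.Term α) :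
    renameTerm e (vh n t) = vh (e n) (renameTerm e t) := by
  refine congrArg (Term.func (L := V0Lang) _) (funext fun i => ?_)
  fin_cases i; rfl

@[simp] theorem subst_var' (a : α) (σ : α → V0Lang.Term β) :
    (Term.var a : V0Lang.Term α).subst σ = σ a := rfl

theorem subst_func' {n : ℕ} (f : V0Lang.Functions n) (ts : Fin n → V0Lang.Term α)
    (σ : α → V0Lang.Term β) :
    (Term.func f ts).subst σ = Term.func f (fun i => (ts i).subst σ) := rfl

@[simp] theorem subst_vzero (σ : α → V0Lang.Term β) :
    (vzero : V0Lang.Term α).subst σ = vzero := by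
  exact congrArg (Term.func (L := V0Lang) _) (funext fun i => i.elim0)

@[simp] theorem subst_vmul (s t : V0Lang.Term α) (σ : α → V0Lang.Term β) :
    (vmul s t).subst σ = vmul (s.subst σ) (t.subst σ) := by
  refine congrArg (Term.func (L := V0Lang) _) (funext fun i => ?_)
  fin_cases i <;> rfl

@[simp] theorem subst_vh (n : ℕ) (t : V0Lang.Term α) (σ : α → V0Lang.Term β) :
    (vh n t).subst σ = vh n (t.subst σ) := by
  refine congrArg (Term.func (L := V0Lang) _) (funext fun i => ?_)
  fin_cases i; rfl

theorem subst_vh_iterate (j n : ℕ) (t : V0Lang.Term α) (σ : α → V0Lang.Term β) :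
    ((vh j)^[n] t).subst σ = (vh j)^[n] (t.subst σ) := by
  induction n with
  | zero => rfl
  | succ n ih => rw [Function.iterate_succ_apply', Function.iterate_succ_apply', subst_vh, ih]

theorem renameTerm_vh_iterate (j n : ℕ) (t : V0Lang.Term α) :
    renameTerm e ((vh j)^[n] t) = (vh (e j))^[n] (renameTerm e t) := by
  induction n with
  | zero => rfl
  | succ n ih =>
    rw [Function.iterate_succ_apply', Function.iterate_succ_apply', renameTerm_vh, ih]

theorem renameTerm_subst (t : V0Lang.Term α) (σ : α → V0Lang.Term β) :
    renameTerm e (t.subst σ) = (renameTerm e t).subst (fun a => renameTerm e (σ a)) := by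
  induction t with
  | var a => rfl
  | func f ts ih =>
    rw [subst_func', renameTerm_func, renameTerm_func, subst_func']
    exact congrArg _ (funext ih)

theorem renameTerm_foldl (l : List ℕ) (t : V0Lang.Term ℕ) :
    renameTerm e (l.foldl (fun acc i => vmul acc (Term.var (i + 1))) t) =
      l.foldl (fun acc i => vmul acc (Term.var (i + 1))) (renameTerm e t) := by
  induction l generalizing t with
  | nil => rfl
  | cons a l ih => rw [List.foldl_cons, List.foldl_cons, ih]; simp

theorem renameTerm_prodVars (j : ℕ) : renameTerm e (prodVars j) = prodVars j := by
  cases j with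
  | zero => exact renameTerm_vzero e
  | succ j => exact renameTerm_foldl e _ _

theorem renameOp_inv (e : Equiv.Perm ℕ) {n : ℕ} (f : V0Lang.Functions n) :
    renameOp e.symm (renameOp e f) = f := by
  cases f with
  | zero => rfl
  | mul => rfl
  | h n => exact congrArg V0Ops.h (e.symm_apply_apply n)

theorem renameTerm_inv (e : Equiv.Perm ℕ) (t : V0Lang.Term α) :
    renameTerm e.symm (renameTerm e t) = t := by
  induction t with
  | var a => rfl
  | func f ts ih =>
    rw [renameTerm_func, renameTerm_func, renameOp_inv]
    exact congrArg _ (funext ih)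

/-- Only finitely many of the symbols `h n` occur in a term. -/
theorem exists_bound_term (t : V0Lang.Term α) :
    ∃ B : ℕ, ∀ e : ℕ → ℕ, (∀ n < B, e n = n) → renameTerm e t = t := by
  induction t with
  | var a => exact ⟨0, fun _ _ => rfl⟩
  | @func l f ts ih =>
    choose b hb using ih
    obtain ⟨c, hc⟩ : ∃ c : ℕ, ∀ e : ℕ → ℕ, (∀ n < c, e n = n) → renameOp e f = f := by
      cases f with
      | zero => exact ⟨0, fun _ _ => rfl⟩
      | mul => exact ⟨0, fun _ _ => rfl⟩
      | h n => exact ⟨n + 1, fun e he => congrArg V0Ops.h (he n n.lt_succ_self)⟩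
    refine ⟨c + ∑ i, b i, fun e he => ?_⟩
    rw [renameTerm_func, hc e fun n hn => he n (by omega)]
    refine congrArg _ (funext fun i => hb i e fun n hn => he n ?_)
    have := Finset.single_le_sum (f := b) (fun _ _ => Nat.zero_le _) (Finset.mem_univ i)
    omega

theorem exists_bound_list (R : List (V0Lang.Term α × V0Lang.Term α)) :
    ∃ B : ℕ, ∀ e : ℕ → ℕ, (∀ n < B, e n = n) →
      ∀ p ∈ R, renameTerm e p.1 = p.1 ∧ renameTerm e p.2 = p.2 := by
  induction R with
  | nil => exact ⟨0, by simp⟩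
  | cons p R ih =>
    obtain ⟨B, hB⟩ := ih
    obtain ⟨b, hb⟩ := exists_bound_term p.1
    obtain ⟨c, hc⟩ := exists_bound_term p.2
    refine ⟨B + b + c, fun e he q hq => ?_⟩
    rcases List.mem_cons.1 hq with rfl | hq
    · exact ⟨hb e fun n hn => he n (by omega), hc e fun n hn => he n (by omega)⟩
    · exact hB e (fun n hn => he n (by omega)) q hq

end Renaming

/-! ### Normal forms -/

/-- Codes of normal forms over `k` generators. The code `(0, S)` stands for the product `w_S` of
the generators in `S`, and `(n + 1, S)` for `h n (w_S)`; the empty product is read as `0`. Hence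
all the codes `(a, ∅)` stand for `0`. -/
abbrev NF (k : ℕ) : Type := ℕ × Finset (Fin k)

namespace NF

variable {k : ℕ}

/-- The product of two squarefree monomials, with `∅` playing the role of `0`. -/
def mulW (S T : Finset (Fin k)) : Finset (Fin k) :=
  if S = ∅ ∨ T = ∅ ∨ ¬ Disjoint S T then ∅ else S ∪ T

/-- Multiplication of normal forms; a product with a factor `h n (w)` is `0`. -/
def mul (x y : NF k) : NF k := if x.1 = 0 ∧ y.1 = 0 then (0, mulW x.2 y.2) else (0, ∅)

/-- The operation `h n` on normal forms, given by `h n (h n w) = h n w` and `h n (h j w) = 0` for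
`j ≠ n`. -/
def h (n : ℕ) (x : NF k) : NF k :=
  if x.1 = 0 then (n + 1, x.2) else if x.1 = n + 1 then x else (0, ∅)

/-- The interpretation of the operation symbols on normal forms. -/
def op : {n : ℕ} → V0Lang.Functions n → (Fin n → NF k) → NF k
  | _, .zero, _ => (0, ∅)
  | _, .mul, v => mul (v 0) (v 1)
  | _, .h n, v => h n (v 0)

/-- The normal form of a term. -/
def eval : V0Lang.Term (Fin k) → NF k
  | .var i => (0, {i})
  | .func f ts => op f (fun i => eval (ts i))

theorem eval_func {n : ℕ} (f : V0Lang.Functions n) (ts : Fin n → V0Lang.Term (Fin k)) :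
    eval (Term.func f ts) = op f (fun i => eval (ts i)) := rfl

theorem eval_vmul (s t : V0Lang.Term (Fin k)) : eval (vmul s t) = mul (eval s) (eval t) := rfl

/-- The action of a map of the indices on the first component of a normal form. -/
def shift (e : ℕ → ℕ) : ℕ → ℕ
  | 0 => 0
  | n + 1 => e n + 1

theorem eval_renameTerm (e : Equiv.Perm ℕ) (t : V0Lang.Term (Fin k)) :
    eval (renameTerm e t) = (shift e (eval t).1, (eval t).2) := by
  induction t with
  | var i => rfl
  | func f ts ih =>
    rw [renameTerm_func, eval_func, eval_func, funext ih]
    have h0 : ∀ a, shift e a = 0 ↔ a = 0 := by intro a; cases a <;> simp [shift]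
    cases f with
    | zero => rfl
    | mul =>
      simp only [renameOp, op, mul, h0]
      split_ifs <;> rfl
    | h n =>
      have h1 : ∀ a, shift e a = e n + 1 ↔ a = n + 1 := by intro a; cases a <;> simp [shift]
      simp only [renameOp, op, h, h0, h1]
      split_ifs <;> rfl

end NF

/-! ### Every term is congruent to its normal form -/

section Congruence

variable {m : ℕ → ℕ} {k : ℕ} {R : Set (V0Lang.Term (Fin k) × V0Lang.Term (Fin k))}

local notation:50 s "≈[" m "," R "]" t:50 => PresEqv (V0Laws m) R s t

theorem PresEqv.vmul_congr {s s' t t' : V0Lang.Term (Fin k)} (h₁ : s ≈[m, R] s')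
    (h₂ : t ≈[m, R] t') : vmul s t ≈[m, R] vmul s' t' := by
  refine PresEqv.app (L := V0Lang) V0Ops.mul _ _ fun i => ?_
  fin_cases i
  exacts [h₁, h₂]

theorem PresEqv.vh_congr (n : ℕ) {s s' : V0Lang.Term (Fin k)} (h₁ : s ≈[m, R] s') :
    vh n s ≈[m, R] vh n s' := by
  refine PresEqv.app (L := V0Lang) (V0Ops.h n) _ _ fun i => ?_
  fin_cases i
  exact h₁

theorem V0Law.inst {p : V0Lang.Term ℕ × V0Lang.Term ℕ} (hp : V0Law m p)
    (σ : ℕ → V0Lang.Term (Fin k)) : p.1.subst σ ≈[m, R] p.2.subst σ :=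
  PresEqv.law p σ hp

variable (s t u : V0Lang.Term (Fin k))

theorem PresEqv.vcomm : vmul s t ≈[m, R] vmul t s := by
  simpa using (V0Law.comm (m := m)).inst (R := R) (fun i => if i = 0 then s else t)

theorem PresEqv.vassoc : vmul s (vmul t u) ≈[m, R] vmul (vmul s t) u := by
  simpa using (V0Law.assoc (m := m)).inst (R := R)
    (fun i => if i = 0 then s else if i = 1 then t else u)

theorem PresEqv.vmul_zero : vmul s vzero ≈[m, R] vzero := by
  simpa using (V0Law.mulZero (m := m)).inst (R := R) (fun _ => s)

theorem PresEqv.vsq : vmul s s ≈[m, R] vzero := by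
  simpa using (V0Law.sq (m := m)).inst (R := R) (fun _ => s)

theorem PresEqv.vmul_vh (n : ℕ) : vmul s (vh n t) ≈[m, R] vzero := by
  simpa using (V0Law.mulH (m := m) n).inst (R := R) (fun i => if i = 0 then s else t)

theorem PresEqv.vh_idem (n : ℕ) : vh n (vh n s) ≈[m, R] vh n s := by
  simpa using (V0Law.idem (m := m) n).inst (R := R) (fun _ => s)

theorem PresEqv.vh_orth {n j : ℕ} (hnj : n ≠ j) : vh n (vh j s) ≈[m, R] vzero := by
  simpa using (V0Law.orth (m := m) n j hnj).inst (R := R) (fun _ => s)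

/-- `h n 0 = 0`, since `h n 0 = h n (h n (h j x)) = h n (h j x) = 0` for any `j ≠ n`. -/
theorem PresEqv.vh_zero (n : ℕ) : vh n vzero ≈[m, R] (vzero : V0Lang.Term (Fin k)) := by
  have h0 : vh n (vh (n + 1) vzero) ≈[m, R] (vzero : V0Lang.Term (Fin k)) :=
    PresEqv.vh_orth _ (by omega)
  exact ((PresEqv.vh_congr n h0).symm.trans (PresEqv.vh_idem _ n)).trans h0

theorem PresEqv.vh_iterate_zero (j n : ℕ) {t : V0Lang.Term (Fin k)} (ht : t ≈[m, R] vzero) :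
    (vh j)^[n] t ≈[m, R] vzero := by
  induction n with
  | zero => exact ht
  | succ n ih =>
    rw [Function.iterate_succ_apply']
    exact (PresEqv.vh_congr j ih).trans (PresEqv.vh_zero j)

variable (m R) in
/-- The congruence of the presentation, as a setoid. -/
def v0Setoid : Setoid (V0Lang.Term (Fin k)) where
  r s t := s ≈[m, R] t
  iseqv := ⟨PresEqv.refl, PresEqv.symm, PresEqv.trans⟩

variable (m R) in
/-- The algebra presented by the generators `Fin k` and the relations `R`. -/
def V0Alg : Type := Quotient (v0Setoid m R)

variable (m R) in
/-- The class of a term in the presented algebra. -/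
def V0Alg.mk (t : V0Lang.Term (Fin k)) : V0Alg m R := Quotient.mk (v0Setoid m R) t

theorem V0Alg.mk_eq {s t : V0Lang.Term (Fin k)} :
    V0Alg.mk m R s = V0Alg.mk m R t ↔ s ≈[m, R] t := Quotient.eq (r := v0Setoid m R)

instance : CommSemigroup (V0Alg m R) where
  mul := Quotient.map₂ vmul fun _ _ h₁ _ _ h₂ => PresEqv.vmul_congr h₁ h₂
  mul_assoc := by
    rintro ⟨a⟩ ⟨b⟩ ⟨c⟩
    exact V0Alg.mk_eq.2 (PresEqv.vassoc a b c).symm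
  mul_comm := by
    rintro ⟨a⟩ ⟨b⟩
    exact V0Alg.mk_eq.2 (PresEqv.vcomm a b)

theorem V0Alg.mk_mul : V0Alg.mk m R s * V0Alg.mk m R t = V0Alg.mk m R (vmul s t) := rfl

variable (m R) in
/-- The product of the generators in `S`, in the presented semigroup with a unit adjoined. -/
noncomputable def genProd (S : Finset (Fin k)) : WithOne (V0Alg m R) :=
  ∏ i ∈ S, (V0Alg.mk m R (Term.var i) : WithOne (V0Alg m R))

variable (m R) in
/-- The term `t` represents the element coded by the normal form `x`. -/
def Represents (x : NF k) (t : V0Lang.Term (Fin k)) : Prop :=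
  if x.2 = ∅ then t ≈[m, R] vzero else
    match x.1 with
    | 0 => (V0Alg.mk m R t : WithOne (V0Alg m R)) = genProd m R x.2
    | n + 1 => ∃ u, (V0Alg.mk m R u : WithOne (V0Alg m R)) = genProd m R x.2 ∧ t ≈[m, R] vh n u

variable {s t}

theorem represents_empty {a : ℕ} : Represents m R (a, ∅) t ↔ t ≈[m, R] vzero := by
  simp [Represents]

theorem represents_zero {S : Finset (Fin k)} (hS : S ≠ ∅) : Represents m R (0, S) t ↔
    (V0Alg.mk m R t : WithOne (V0Alg m R)) = genProd m R S := by
  simp [Represents, hS]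

theorem represents_succ {n : ℕ} {S : Finset (Fin k)} (hS : S ≠ ∅) :
    Represents m R (n + 1, S) t ↔
      ∃ u, (V0Alg.mk m R u : WithOne (V0Alg m R)) = genProd m R S ∧ t ≈[m, R] vh n u := by
  simp [Represents, hS]

/-- A normal form determines the class of the terms it represents. -/
theorem Represents.eqv {x : NF k} (hs : Represents m R x s) (ht : Represents m R x t) :
    s ≈[m, R] t := by
  obtain ⟨a, S⟩ := x
  rcases eq_or_ne S ∅ with rfl | hS
  · exact (represents_empty.1 hs).trans (represents_empty.1 ht).symm
  cases a with
  | zero =>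
    rw [represents_zero hS] at hs ht
    exact V0Alg.mk_eq.1 (WithOne.coe_inj.1 (hs.trans ht.symm))
  | succ n =>
    obtain ⟨u, hu, hs⟩ := (represents_succ hS).1 hs
    obtain ⟨v, hv, ht⟩ := (represents_succ hS).1 ht
    have huv : u ≈[m, R] v := V0Alg.mk_eq.1 (WithOne.coe_inj.1 (hu.trans hv.symm))
    exact (hs.trans (PresEqv.vh_congr n huv)).trans ht.symm

theorem zero_vmul_eqv (hs : s ≈[m, R] vzero) (t) : vmul s t ≈[m, R] vzero :=
  ((PresEqv.vmul_congr hs (PresEqv.refl t)).trans (PresEqv.vcomm _ _)).trans (PresEqv.vmul_zero t)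

theorem vmul_zero_eqv (s) (ht : t ≈[m, R] vzero) : vmul s t ≈[m, R] vzero :=
  (PresEqv.vcomm _ _).trans (zero_vmul_eqv ht s)

/-- A square absorbs everything: `g * g * c = 0` in the presented algebra with a unit adjoined. -/
theorem sq_mul_eq_zero (g c : WithOne (V0Alg m R)) (hg : g ≠ 1) :
    g * g * c = (V0Alg.mk m R vzero : WithOne (V0Alg m R)) := by
  obtain ⟨⟨g⟩, rfl⟩ := WithOne.ne_one_iff_exists.1 hg
  have h0 : V0Alg.mk m R g * V0Alg.mk m R g = V0Alg.mk m R vzero :=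
    V0Alg.mk_eq.2 (PresEqv.vsq g)
  change (V0Alg.mk m R g : WithOne (V0Alg m R)) * (V0Alg.mk m R g) * c = _
  rw [← WithOne.coe_mul, h0]
  rcases eq_or_ne c 1 with rfl | hc
  · rw [mul_one]
  · obtain ⟨⟨c⟩, rfl⟩ := WithOne.ne_one_iff_exists.1 hc
    change (V0Alg.mk m R vzero : WithOne (V0Alg m R)) * (V0Alg.mk m R c) = _
    rw [← WithOne.coe_mul, WithOne.coe_inj]
    exact V0Alg.mk_eq.2 (zero_vmul_eqv (PresEqv.refl _) c)

theorem Represents.mul {x y : NF k} (hs : Represents m R x s) (ht : Represents m R y t) :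
    Represents m R (NF.mul x y) (vmul s t) := by
  obtain ⟨a, S⟩ := x
  obtain ⟨b, T⟩ := y
  rcases eq_or_ne S ∅ with rfl | hS
  · have := zero_vmul_eqv (represents_empty.1 hs) t
    simpa [NF.mul, NF.mulW, represents_empty] using this
  rcases eq_or_ne T ∅ with rfl | hT
  · have := vmul_zero_eqv s (represents_empty.1 ht)
    simpa [NF.mul, NF.mulW, represents_empty] using this
  cases b with
  | succ b =>
    obtain ⟨u, -, hu⟩ := (represents_succ hT).1 ht
    simpa [NF.mul, represents_empty] using
      (PresEqv.vmul_congr (PresEqv.refl s) hu).trans (PresEqv.vmul_vh s u b)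
  | zero =>
  cases a with
  | succ a =>
    obtain ⟨u, -, hu⟩ := (represents_succ hS).1 hs
    simpa [NF.mul, represents_empty] using
      ((PresEqv.vmul_congr hu (PresEqv.refl t)).trans (PresEqv.vcomm _ _)).trans
        (PresEqv.vmul_vh t u a)
  | zero =>
    rw [represents_zero hS] at hs
    rw [represents_zero hT] at ht
    have hmul : (V0Alg.mk m R (vmul s t) : WithOne (V0Alg m R)) =
        genProd m R S * genProd m R T := by
      rw [← hs, ← ht, ← WithOne.coe_mul, V0Alg.mk_mul]
    by_cases hd : Disjoint S T
    · have hU : S ∪ T ≠ ∅ := fun h => hS (Finset.union_eq_empty.1 h).1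
      simp only [NF.mul, NF.mulW, hS, hT, hd, not_true, or_self, and_self, if_true, if_false]
      rw [represents_zero hU, hmul, genProd, genProd, genProd, Finset.prod_union hd]
    · obtain ⟨i, hiS, hiT⟩ := Finset.not_disjoint_iff.1 hd
      simp only [NF.mul, NF.mulW, hd, not_false_eq_true, or_true, and_self, if_true]
      rw [represents_empty, ← V0Alg.mk_eq, ← WithOne.coe_inj, hmul, genProd, genProd,
        ← Finset.mul_prod_erase S _ hiS, ← Finset.mul_prod_erase T _ hiT, mul_mul_mul_comm]
      exact sq_mul_eq_zero _ _ WithOne.coe_ne_one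

theorem Represents.h (n : ℕ) {x : NF k} (hs : Represents m R x s) :
    Represents m R (NF.h n x) (vh n s) := by
  obtain ⟨a, S⟩ := x
  rcases eq_or_ne S ∅ with rfl | hS
  · have : vh n s ≈[m, R] vzero :=
      (PresEqv.vh_congr n (represents_empty.1 hs)).trans (PresEqv.vh_zero n)
    unfold NF.h
    split_ifs <;> simpa [represents_empty] using this
  cases a with
  | zero =>
    exact (represents_succ hS).2 ⟨s, (represents_zero hS).1 hs, PresEqv.refl _⟩
  | succ a =>
    obtain ⟨u, hu, hsu⟩ := (represents_succ hS).1 hs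
    by_cases han : a = n
    · subst han
      simp only [NF.h, Nat.succ_ne_zero, if_false, if_true]
      exact (represents_succ hS).2 ⟨u, hu, (PresEqv.vh_congr a hsu).trans (PresEqv.vh_idem u a)⟩
    · simp only [NF.h, Nat.succ_ne_zero, Nat.succ.injEq, han, if_false]
      exact represents_empty.2
        ((PresEqv.vh_congr n hsu).trans (PresEqv.vh_orth u fun h => han h.symm))

theorem represents_eval (t : V0Lang.Term (Fin k)) : Represents m R (NF.eval t) t := by
  induction t with
  | var i => exact (represents_zero (Finset.singleton_ne_empty i)).2 (by simp [genProd])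
  | func f ts ih =>
    rw [NF.eval_func]
    cases f with
    | zero =>
      rw [show ts = ![] from funext fun i => i.elim0]
      exact represents_empty.2 (PresEqv.refl vzero)
    | mul =>
      rw [show ts = ![ts 0, ts 1] from funext fun i => by fin_cases i <;> rfl]
      exact (ih 0).mul (ih 1)
    | h n =>
      rw [show ts = ![ts 0] from funext fun i => by fin_cases i; rfl]
      exact (ih 0).h n

theorem eqv_of_eval_eq (h : NF.eval s = NF.eval t) : s ≈[m, R] t :=
  (represents_eval s).eqv (h ▸ represents_eval t)

/-- A nonzero product of terms involves at least as many generators as it has factors. -/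
theorem foldl_card (σ : ℕ → V0Lang.Term (Fin k)) (l : List ℕ) (t : V0Lang.Term ℕ) (c : ℕ)
    (ht : (NF.eval (t.subst σ)).2 = ∅ ∨ c ≤ (NF.eval (t.subst σ)).2.card) :
    (NF.eval ((l.foldl (fun acc i => vmul acc (Term.var (i + 1))) t).subst σ)).2 = ∅ ∨
      c + l.length ≤
        (NF.eval ((l.foldl (fun acc i => vmul acc (Term.var (i + 1))) t).subst σ)).2.card := by
  induction l generalizing t c with
  | nil => exact ht
  | cons a l ih =>
    rw [List.foldl_cons, List.length_cons, Nat.add_comm l.length, ← Nat.add_assoc]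
    apply ih
    rw [subst_vmul, NF.eval_vmul, subst_var']
    generalize NF.eval (t.subst σ) = x at ht ⊢
    generalize NF.eval (σ (a + 1)) = y
    unfold NF.mul NF.mulW
    split_ifs with h₁ h₂
    · exact Or.inl rfl
    · right
      push Not at h₂
      obtain ⟨hx, hy, hd⟩ := h₂
      rw [Finset.card_union_of_disjoint hd]
      have := Finset.card_pos.2 hy
      have := ht.resolve_left hx.ne_empty
      omega
    · exact Or.inl rfl

/-- A product of more than `k` terms over `k` generators vanishes. -/
theorem prodVars_eqv_zero {j : ℕ} (hj : k < j) (σ : ℕ → V0Lang.Term (Fin k)) :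
    (prodVars j).subst σ ≈[m, R] vzero := by
  obtain ⟨j, rfl⟩ : ∃ i, j = i + 1 := ⟨j - 1, by omega⟩
  have hfold := foldl_card σ (List.range j) (Term.var 0) 1
    ((Finset.eq_empty_or_nonempty _).imp_right fun h => Finset.card_pos.2 h)
  have he : (NF.eval ((prodVars (j + 1)).subst σ)).2 = ∅ := by
    refine hfold.resolve_right fun h => ?_
    rw [List.length_range] at h
    have := h.trans (Finset.card_le_univ _)
    rw [Fintype.card_fin] at this
    omega
  have hr := represents_eval (m := m) (R := R) ((prodVars (j + 1)).subst σ)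
  rw [← Prod.mk.eta (p := NF.eval ((prodVars (j + 1)).subst σ)), he] at hr
  exact represents_empty.1 hr

/-- The congruence is invariant under permutations of the indices that fix the relations and all
indices up to the number of generators: the remaining star laws are consequences of the other
laws. -/
theorem PresEqv.rename (e : Equiv.Perm ℕ) (hek : ∀ n ≤ k, e n = n)
    (heR : ∀ p ∈ R, renameTerm e p.1 = p.1 ∧ renameTerm e p.2 = p.2)
    {s t : V0Lang.Term (Fin k)} (h : s ≈[m, R] t) :
    renameTerm e s ≈[m, R] renameTerm e t := by
  induction h with
  | @rel s t h =>
    have := heR _ h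
    dsimp only at this
    rw [this.1, this.2]
    exact PresEqv.rel h
  | law p σ hp =>
    rw [renameTerm_subst, renameTerm_subst]
    generalize (fun a => renameTerm e (σ a)) = τ
    change V0Law m p at hp
    cases hp with
    | comm => simpa using PresEqv.vcomm (τ 0) (τ 1)
    | assoc => simpa using PresEqv.vassoc (τ 0) (τ 1) (τ 2)
    | mulZero => simpa using PresEqv.vmul_zero (τ 0)
    | sq => simpa using PresEqv.vsq (τ 0)
    | mulH n => simpa using PresEqv.vmul_vh (τ 0) (τ 1) (e n)
    | idem n => simpa using PresEqv.vh_idem (τ 0) (e n)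
    | orth n j hnj => simpa using PresEqv.vh_orth (τ 0) (e.injective.ne hnj)
    | star n =>
      dsimp only
      rw [renameTerm_vh_iterate, renameTerm_prodVars, renameTerm_vzero]
      rcases le_or_gt (m n) k with hle | hlt
      · rw [hek _ hle]
        exact (V0Law.star n).inst τ
      · rw [subst_vh_iterate, subst_vzero]
        exact PresEqv.vh_iterate_zero _ _ (prodVars_eqv_zero hlt τ)
  | refl t => exact PresEqv.refl _
  | symm _ ih => exact ih.symm
  | trans _ _ ih₁ ih₂ => exact ih₁.trans ih₂
  | app f ts us _ ih =>
    rw [renameTerm_func, renameTerm_func]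
    exact PresEqv.app (L := V0Lang) _ _ _ ih

end Congruence

/-! ### Moving large indices into a bounded range -/

section Compression

/-- Replaces the indices above `B` in a pair by `B + 1` and `B + 2`, remembering only which of them
are above `B` and whether they are equal. -/
def compress (B : ℕ) (p : ℕ × ℕ) : ℕ × ℕ :=
  (if p.1 ≤ B then p.1 else B + 1, if p.2 ≤ B then p.2 else if p.2 = p.1 then B + 1 else B + 2)

theorem compress_le (B : ℕ) (p : ℕ × ℕ) :
    (compress B p).1 ≤ B + 2 ∧ (compress B p).2 ≤ B + 2 := by
  unfold compress
  constructor <;> dsimp only <;> split_ifs <;> omega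

theorem shift_of_fix {B : ℕ} {e : ℕ → ℕ} (he : ∀ n < B, e n = n) {a : ℕ} (ha : a ≤ B) :
    NF.shift e a = a := by
  cases a with
  | zero => rfl
  | succ a => rw [NF.shift, he a (by omega)]

/-- The compression of a pair of indices is induced by a permutation that moves only indices
`n ≥ B`. -/
theorem exists_perm_compress (B : ℕ) (p : ℕ × ℕ) :
    ∃ e : Equiv.Perm ℕ, (∀ n < B, e n = n) ∧
      NF.shift e p.1 = (compress B p).1 ∧ NF.shift e p.2 = (compress B p).2 := by
  obtain ⟨a, b⟩ := p
  -- One swap brings `a` to its compressed value.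
  obtain ⟨e, he, hea⟩ : ∃ e : Equiv.Perm ℕ, (∀ n < B, e n = n) ∧
      NF.shift e a = if a ≤ B then a else B + 1 := by
    by_cases ha : a ≤ B
    · exact ⟨1, fun _ _ => rfl, by rw [if_pos ha]; cases a <;> rfl⟩
    · obtain ⟨a, rfl⟩ : ∃ i, a = i + 1 := ⟨a - 1, by omega⟩
      refine ⟨Equiv.swap a B, fun n hn => Equiv.swap_apply_of_ne_of_ne (by omega) (by omega), ?_⟩
      rw [if_neg ha, NF.shift, Equiv.swap_apply_left]
  by_cases hb : b ≤ B
  · exact ⟨e, he, hea, by rw [shift_of_fix he hb]; simp [compress, hb]⟩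
  by_cases hab : b = a
  · subst hab
    refine ⟨e, he, hea, ?_⟩
    rw [hea]; simp [compress, hb]
  -- A second swap, fixing the image of `a`, brings `b` to `B + 2`.
  obtain ⟨b, rfl⟩ : ∃ i, b = i + 1 := ⟨b - 1, by omega⟩
  have heb : B ≤ e b := by
    by_contra hlt
    have := e.injective (he (e b) (by omega))
    omega
  have hfix : ∀ n < B, (Equiv.swap (e b) (B + 1) * e) n = n := fun n hn => by
    rw [Equiv.Perm.mul_apply, he n hn]
    exact Equiv.swap_apply_of_ne_of_ne (by omega) (by omega)
  refine ⟨Equiv.swap (e b) (B + 1) * e, hfix, ?_, ?_⟩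
  · by_cases ha : a ≤ B
    · rw [shift_of_fix hfix ha]; simp [compress, ha]
    · obtain ⟨a, rfl⟩ : ∃ i, a = i + 1 := ⟨a - 1, by omega⟩
      rw [if_neg ha, NF.shift] at hea
      have hne : e a ≠ e b := e.injective.ne (by omega)
      rw [NF.shift, Equiv.Perm.mul_apply, Equiv.swap_apply_of_ne_of_ne hne (by omega)]
      simp [compress, ha, hea]
  · rw [NF.shift, Equiv.Perm.mul_apply, Equiv.swap_apply_left]
    simp [compress, hb, hab]

end Compression

/-! ### Computability -/

section Computability

variable {k : ℕ}

/-- A primitive recursive coding of the finite type of sets of generators. All functions out of a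
finite type are primitive recursive, so the choice of the coding does not matter. -/
noncomputable instance primcodableGenSet (k : ℕ) : Primcodable (Finset (Fin k)) :=
  Primcodable.ofEquiv (Fin (Fintype.card (Finset (Fin k)))) (Fintype.equivFin _)

/-- One step of the stack machine evaluating a term in Polish notation from right to left. The
symbol codes are `2 * i` for the variable `i`, and `1`, `5`, `4 * n + 3` for `0`, the product and
`h n`. -/
def stackStep (k : ℕ) (c : ℕ) (st : List (NF k)) : List (NF k) :=
  if c % 2 = 0 then
    (0, (((List.finRange k).map fun i => ({i} : Finset (Fin k)))[c / 2]?).getD ∅) :: st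
  else if c = 1 then (0, ∅) :: st
  else if c = 5 then NF.mul st.headI st.tail.headI :: st.tail.tail
  else NF.h (c / 4) st.headI :: st.tail

theorem primrec_nf_mul : Primrec₂ (NF.mul (k := k)) := by
  unfold NF.mul
  have h1 : Primrec fun p : NF k × NF k => NF.mulW p.1.2 p.2.2 :=
    (Primrec.dom_finite fun q : Finset (Fin k) × Finset (Fin k) => NF.mulW q.1 q.2).comp
      (Primrec.pair (Primrec.snd.comp Primrec.fst) (Primrec.snd.comp Primrec.snd))
  exact Primrec.ite
    ((Primrec.eq.comp (Primrec.fst.comp Primrec.fst) (Primrec.const 0)).and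
      (Primrec.eq.comp (Primrec.fst.comp Primrec.snd) (Primrec.const 0)))
    (Primrec.pair (Primrec.const 0) h1) (Primrec.const _)

theorem primrec_nf_h : Primrec₂ (NF.h (k := k)) := by
  unfold NF.h
  have hx : Primrec fun p : ℕ × NF k => p.2.1 := Primrec.fst.comp Primrec.snd
  have hn : Primrec fun p : ℕ × NF k => p.1 + 1 := Primrec.succ.comp Primrec.fst
  exact Primrec.ite (Primrec.eq.comp hx (Primrec.const 0))
    (Primrec.pair hn (Primrec.snd.comp Primrec.snd))
    (Primrec.ite (Primrec.eq.comp hx hn) Primrec.snd (Primrec.const _))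

theorem primrec_stackStep : Primrec₂ (stackStep k) := by
  unfold stackStep
  have hc : Primrec fun p : ℕ × List (NF k) => p.1 := Primrec.fst
  have hst : Primrec fun p : ℕ × List (NF k) => p.2 := Primrec.snd
  have htl : Primrec fun p : ℕ × List (NF k) => p.2.tail := Primrec.list_tail.comp hst
  have hhd : Primrec fun p : ℕ × List (NF k) => p.2.headI := Primrec.list_headI.comp hst
  have hvar : Primrec fun p : ℕ × List (NF k) =>
      (((List.finRange k).map fun i => ({i} : Finset (Fin k)))[p.1 / 2]?).getD ∅ :=
    Primrec.option_getD.comp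
      ((Primrec.list_getElem?₁ _).comp (Primrec.nat_div.comp hc (Primrec.const 2)))
      (Primrec.const ∅)
  refine Primrec.ite
    (Primrec.eq.comp (Primrec.nat_mod.comp hc (Primrec.const 2)) (Primrec.const 0))
    (Primrec.list_cons.comp (Primrec.pair (Primrec.const 0) hvar) hst)
    (Primrec.ite (Primrec.eq.comp hc (Primrec.const 1))
      (Primrec.list_cons.comp (Primrec.const _) hst)
      (Primrec.ite (Primrec.eq.comp hc (Primrec.const 5)) ?_ ?_))
  · exact Primrec.list_cons.comp
      (primrec_nf_mul.comp hhd (Primrec.list_headI.comp htl)) (Primrec.list_tail.comp htl)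
  · exact Primrec.list_cons.comp
      (primrec_nf_h.comp (Primrec.nat_div.comp hc (Primrec.const 4)) hhd) htl

/-- Computes the normal form of a term from its code. -/
def evalCode (k : ℕ) (c : ℕ) : NF k :=
  ((Denumerable.ofNat (List ℕ) c).foldr (stackStep k) []).headI

theorem primrec_evalCode : Primrec (evalCode k) := by
  have h := Primrec.list_foldr (f := fun c : ℕ => Denumerable.ofNat (List ℕ) c)
    (g := fun _ => ([] : List (NF k))) (h := fun _ p => stackStep k p.1 p.2)
    (Primrec.ofNat _) (Primrec.const _)
    (primrec_stackStep.comp (Primrec.fst.comp Primrec.snd) (Primrec.snd.comp Primrec.snd))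
  exact Primrec.list_headI.comp h

/-- The code of a list depends only on the codes of its entries. -/
theorem encode_list_map {α : Type*} [Encodable α] (l : List α) :
    Encodable.encode l = Encodable.encode (l.map Encodable.encode) := by
  induction l with
  | nil => rfl
  | cons a l ih => rw [List.map_cons, Encodable.encode_list_cons, Encodable.encode_list_cons, ih,
      Encodable.encode_nat]

/-- Running the stack machine on the code of a term pushes the normal form of the term. -/
theorem foldr_listEncode (t : V0Lang.Term (Fin k)) (st : List (NF k)) :
    (t.listEncode.map Encodable.encode).foldr (stackStep k) st = NF.eval t :: st := by
  induction t generalizing st with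
  | var i =>
    have hc : Encodable.encode (Sum.inl i : Fin k ⊕ (Σ i, V0Lang.Functions i)) = 2 * i := rfl
    simp [Term.listEncode, hc, stackStep, NF.eval]
  | func f ts ih =>
    rw [NF.eval_func]
    cases f with
    | zero =>
      have hc : Encodable.encode (Sum.inr ⟨0, V0Ops.zero⟩ : Fin k ⊕ (Σ i, V0Lang.Functions i)) = 1 :=
        rfl
      simp [Term.listEncode, hc, stackStep, NF.op]
    | mul =>
      have hc : Encodable.encode (Sum.inr ⟨2, V0Ops.mul⟩ : Fin k ⊕ (Σ i, V0Lang.Functions i)) = 5 :=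
        rfl
      have hl : List.finRange 2 = [0, 1] := rfl
      simp [Term.listEncode, hc, hl, ih, stackStep, NF.op]
    | h n =>
      have hc : Encodable.encode (Sum.inr ⟨1, V0Ops.h n⟩ : Fin k ⊕ (Σ i, V0Lang.Functions i)) =
        2 * (2 * n + 1) + 1 := rfl
      have hl : List.finRange 1 = [0] := rfl
      have h1 : (2 * (2 * n + 1) + 1) % 2 ≠ 0 := by omega
      have h2 : 2 * (2 * n + 1) + 1 ≠ 1 := by omega
      have h3 : 2 * (2 * n + 1) + 1 ≠ 5 := by omega
      have h4 : (2 * (2 * n + 1) + 1) / 4 = n := by omega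
      simp only [Term.listEncode, List.map_cons, List.foldr_cons, hc, hl, List.flatMap_cons,
        List.flatMap_nil, List.append_nil, ih, stackStep, if_neg h1, if_neg h2, if_neg h3, h4]
      rfl

theorem evalCode_encode (t : V0Lang.Term (Fin k)) :
    evalCode k (Encodable.encode t) = NF.eval t := by
  have h : Encodable.encode t = Encodable.encode t.listEncode := rfl
  rw [h, encode_list_map, evalCode, Denumerable.ofNat_encode, foldr_listEncode]
  rfl

theorem primrec_compress (B : ℕ) : Primrec (compress B) := by
  unfold compress
  have hle : ∀ {f : ℕ × ℕ → ℕ}, Primrec f → PrimrecPred fun p => f p ≤ B := fun hf =>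
    Primrec.nat_le.comp hf (Primrec.const B)
  exact Primrec.pair
    (Primrec.ite (hle Primrec.fst) Primrec.fst (Primrec.const _))
    (Primrec.ite (hle Primrec.snd) Primrec.snd
      (Primrec.ite (Primrec.eq.comp Primrec.snd Primrec.fst) (Primrec.const _) (Primrec.const _)))

theorem primrecPred_mem_list {α : Type*} [Primcodable α] (l : List α) :
    PrimrecPred fun a => a ∈ l := by
  induction l with
  | nil => exact (PrimrecPred.of_eq (Primrec.eq.comp (Primrec.const 0) (Primrec.const 1)) (by simp))
  | cons b l ih =>
    exact ((Primrec.eq.comp Primrec.id (Primrec.const b)).or ih).of_eq (by simp)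

end Computability

/-- The variety `V₀` has solvable word problem: for every finite presentation (finitely many
generators and relations) the congruence `θ_𝒫` is decidable. -/
theorem v0_solvable_word_problem (X : Set ℕ) (m : ℕ → ℕ)
    (hm : Computable m) (hrange : Set.range m = X)
    (hX : ¬ ComputablePred (· ∈ X)) :
    SolvableWP V0Lang (V0Laws m) := by
  intro k R
  obtain ⟨B₀, hB₀⟩ := exists_bound_list R
  set B := B₀ + k + 1 with hB
  set r := PresEqv (V0Laws m) {p | p ∈ R} with hr
  have hren : ∀ e : Equiv.Perm ℕ, (∀ n < B, e n = n) → ∀ s t, r s t →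
      r (renameTerm e s) (renameTerm e t) := fun e he s t =>
    PresEqv.rename e (fun n hn => he n (by omega)) (hB₀ e fun n hn => he n (by omega))
  -- The finite table of compressed pairs of normal forms that represent congruent terms.
  let D : Set ((ℕ × ℕ) × Finset (Fin k) × Finset (Fin k)) :=
    {q | (q.1.1 ≤ B + 2 ∧ q.1.2 ≤ B + 2) ∧
      ∃ s t, NF.eval s = (q.1.1, q.2.1) ∧ NF.eval t = (q.1.2, q.2.2) ∧ r s t}
  have hD : D.Finite :=
    (((Set.finite_Iic (B + 2)).prod (Set.finite_Iic (B + 2))).prod Set.finite_univ).subset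
      fun q hq => ⟨⟨hq.1.1, hq.1.2⟩, trivial⟩
  let key : NF k × NF k → (ℕ × ℕ) × Finset (Fin k) × Finset (Fin k) :=
    fun p => (compress B (p.1.1, p.2.1), p.1.2, p.2.2)
  have hkey : Primrec key :=
    Primrec.pair
      ((primrec_compress B).comp
        (Primrec.pair (Primrec.fst.comp Primrec.fst) (Primrec.fst.comp Primrec.snd)))
      (Primrec.pair (Primrec.snd.comp Primrec.fst) (Primrec.snd.comp Primrec.snd))
  have hcode : Primrec fun c : ℕ => key (evalCode k c.unpair.1, evalCode k c.unpair.2) :=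
    hkey.comp (Primrec.pair
      (primrec_evalCode.comp (Primrec.fst.comp Primrec.unpair))
      (primrec_evalCode.comp (Primrec.snd.comp Primrec.unpair)))
  classical
  have hdec := ((primrecPred_mem_list hD.toFinset.toList).comp hcode).decide
  refine ⟨_, hdec.to_comp, fun s t => ?_⟩
  simp only [decide_eq_true_eq, Nat.unpair_pair, evalCode_encode, Finset.mem_toList,
    Set.Finite.mem_toFinset]
  obtain ⟨e, he, he₁, he₂⟩ := exists_perm_compress B ((NF.eval s).1, (NF.eval t).1)
  have hs : NF.eval (renameTerm e s) = ((key (NF.eval s, NF.eval t)).1.1, (NF.eval s).2) := by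
    rw [NF.eval_renameTerm, he₁]
  have ht : NF.eval (renameTerm e t) = ((key (NF.eval s, NF.eval t)).1.2, (NF.eval t).2) := by
    rw [NF.eval_renameTerm, he₂]
  constructor
  · exact fun h => ⟨compress_le B _, _, _, hs, ht, hren e he s t h⟩
  · rintro ⟨-, s', t', hs', ht', h⟩
    have h' : r (renameTerm e s) (renameTerm e t) :=
      ((eqv_of_eval_eq (hs.trans hs'.symm)).trans h).trans (eqv_of_eval_eq (ht'.trans ht.symm))
    have he' : ∀ n < B, e.symm n = n := fun n hn => by rw [Equiv.symm_apply_eq, he n hn]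
    have := hren e.symm he' _ _ h'
    rwa [renameTerm_inv, renameTerm_inv] at this
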